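/- For every τ in the complex upper half-plane, (1 − c(τ) − 2c(τ)²)·η(3τ)·η(6τ) = c(τ)·η(τ/3)·η(2τ/3); equivalently 1/c(τ) − 1 − 2c(τ) = η(τ/3)η(2τ/3)/(η(3τ)η(6τ)). -/

import Mathlib

open Complex

/-- The nome `q = exp(2πiτ)`. -/
noncomputable def nome (τ : ℂ) : ℂ := Complex.exp (2 * Real.pi * I * τ)

/-- Ramanujan's cubic continued fraction, as an infinite product:
`c(τ) = q^{1/3} ∏_{n≥1} (1-q^{6n-1})(1-q^{6n-5})/(1-q^{6n-3})²`. -/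
noncomputable def c (τ : ℂ) : ℂ :=
  Complex.exp (2 * Real.pi * I * τ / 3) *
    ∏' n : ℕ,
      ((1 - nome τ ^ (6 * (n + 1) - 1)) * (1 - nome τ ^ (6 * (n + 1) - 5)) /
        (1 - nome τ ^ (6 * (n + 1) - 3)) ^ 2)

/-- The Dedekind eta function `η(τ) = e^{πiτ/12} ∏_{n≥1} (1 - e^{2πinτ})`. -/
noncomputable def dedekindEta (τ : ℂ) : ℂ :=
  Complex.exp (Real.pi * I * τ / 12) *
    ∏' n : ℕ, (1 - Complex.exp (2 * Real.pi * I * (n + 1) * τ))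

/-- `α(τ) = 3 + 27 η(9τ)³/η(τ)³`. -/
noncomputable def alpha (τ : ℂ) : ℂ :=
  3 + 27 * dedekindEta (9 * τ) ^ 3 / dedekindEta τ ^ 3

/-- `β(τ) = 3 + η(τ/3)³/η(3τ)³`. -/
noncomputable def beta (τ : ℂ) : ℂ :=
  3 + dedekindEta (τ / 3) ^ 3 / dedekindEta (3 * τ) ^ 3

namespace QSeries

open Filter Topology

/-! ### The infinite `q`-Pochhammer symbol -/

/-- The infinite `q`-Pochhammer symbol `(a; q)_∞ = ∏_{n≥0} (1 - a qⁿ)`. -/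
noncomputable def qPoch (a q : ℂ) : ℂ := ∏' n : ℕ, (1 - a * q ^ n)

theorem multipliable_qPoch (a : ℂ) {q : ℂ} (hq : ‖q‖ < 1) :
    Multipliable fun n : ℕ ↦ 1 - a * q ^ n := by
  simp_rw [sub_eq_add_neg]
  apply multipliable_one_add_of_summable
  simpa using (summable_geometric_of_lt_one (norm_nonneg _) hq).mul_left ‖a‖

theorem one_sub_ne_zero_of_norm_lt_one {a : ℂ} (ha : ‖a‖ < 1) : 1 - a ≠ 0 := by
  intro h
  rw [← sub_eq_zero.mp h] at ha
  simp at ha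

theorem norm_pow_succ_lt_one {q : ℂ} (hq : ‖q‖ < 1) (n : ℕ) : ‖q ^ (n + 1)‖ < 1 := by
  rw [norm_pow]
  exact pow_lt_one₀ (norm_nonneg _) hq n.succ_ne_zero

theorem qPoch_ne_zero {a q : ℂ} (ha : ‖a‖ < 1) (hq : ‖q‖ < 1) : qPoch a q ≠ 0 := by
  have hterm (n : ℕ) : ‖a * q ^ n‖ < 1 := by
    rw [norm_mul, norm_pow]
    exact (mul_le_of_le_one_right (norm_nonneg _)
      (pow_le_one₀ (norm_nonneg _) hq.le)).trans_lt ha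
  simp_rw [qPoch, sub_eq_add_neg]
  refine tprod_one_add_ne_zero_of_summable (fun n ↦ ?_) ?_
  · simpa [sub_eq_add_neg] using one_sub_ne_zero_of_norm_lt_one (hterm n)
  · simpa using (summable_geometric_of_lt_one (norm_nonneg _) hq).mul_left ‖a‖

theorem qPoch_eq_one_sub_mul (a : ℂ) {q : ℂ} (hq : ‖q‖ < 1) :
    qPoch a q = (1 - a) * qPoch (a * q) q := by
  have h : Multipliable fun n : ℕ ↦ 1 - a * q ^ (n + 1) := by
    simpa only [pow_succ', mul_assoc] using multipliable_qPoch (a * q) hq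
  have h2 : ∏' n : ℕ, (1 - a * q ^ (n + 1)) = qPoch (a * q) q := by
    simp only [qPoch, pow_succ', mul_assoc]
  rw [← h2]
  simpa only [qPoch, pow_zero, mul_one] using tprod_eq_zero_mul' (f := fun n : ℕ ↦ 1 - a * q ^ n) h

theorem qPoch_mul_qPoch_neg (a : ℂ) {q : ℂ} (hq : ‖q‖ < 1) :
    qPoch a q * qPoch (-a) q = qPoch (a ^ 2) (q ^ 2) := by
  rw [qPoch, qPoch, ← (multipliable_qPoch a hq).tprod_mul (multipliable_qPoch (-a) hq), qPoch]
  congr 1 with n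
  ring

/-- Splitting `(a; q)_∞` according to residue classes modulo `N`. -/
theorem qPoch_eq_prod_qPoch_pow (a : ℂ) {q : ℂ} (hq : ‖q‖ < 1) (N : ℕ) [NeZero N] :
    qPoch a q = ∏ j : Fin N, qPoch (a * q ^ (j : ℕ)) (q ^ N) := by
  have hqN : ‖q ^ N‖ < 1 := by
    rw [norm_pow]
    exact pow_lt_one₀ (norm_nonneg _) hq (NeZero.ne N)
  have h := (Nat.divModEquiv N).symm.multipliable_iff.mpr (multipliable_qPoch a hq)
  rw [qPoch, ← (Nat.divModEquiv N).symm.tprod_eq]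
  refine (h.tprod_prod' fun _ ↦ (hasProd_fintype _).multipliable).trans ?_
  simp_rw [qPoch, tprod_fintype]
  rw [← Multipliable.tprod_finsetProd fun j _ ↦ multipliable_qPoch _ hqN]
  congr! 3 with m j
  simp only [Function.comp_apply, Nat.divModEquiv_symm_apply]
  ring

theorem qPoch_eq_mul_two (a : ℂ) {q : ℂ} (hq : ‖q‖ < 1) :
    qPoch a q = qPoch a (q ^ 2) * qPoch (a * q) (q ^ 2) := by
  simpa [Fin.prod_univ_succ] using qPoch_eq_prod_qPoch_pow a hq 2

theorem qPoch_eq_mul_three (a : ℂ) {q : ℂ} (hq : ‖q‖ < 1) :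
    qPoch a q = qPoch a (q ^ 3) * qPoch (a * q) (q ^ 3) * qPoch (a * q ^ 2) (q ^ 3) := by
  simpa [Fin.prod_univ_succ, mul_assoc] using qPoch_eq_prod_qPoch_pow a hq 3

/-! ### Jacobi's triple product -/

/-- The general term `(-a)ᵏ q^{k(k-1)/2}` of the theta series. -/
noncomputable def thetaTerm (a q : ℂ) (k : ℤ) : ℂ := (-a) ^ k * q ^ (k * (k - 1) / 2)

/-- The theta function `(a; q)_∞ (q/a; q)_∞ (q; q)_∞` in product form. -/
noncomputable def theta (a q : ℂ) : ℂ := qPoch a q * qPoch (q / a) q * qPoch q q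

theorem thetaTerm_sub_one {a q : ℂ} (ha : a ≠ 0) (hq : q ≠ 0) (k : ℤ) :
    -a * thetaTerm a q (k - 1) = q ^ (1 - k) * thetaTerm a q k := by
  have hk : (k - 1) * (k - 1 - 1) / 2 = (1 - k) + k * (k - 1) / 2 := by
    rw [add_comm, ← Int.add_mul_ediv_left _ _ two_ne_zero]
    congr 1
    ring
  rw [thetaTerm, thetaTerm, hk, zpow_add₀ hq, zpow_sub_one₀ (neg_ne_zero.mpr ha)]
  field_simp

theorem thetaTerm_add_one {a q : ℂ} (ha : a ≠ 0) (hq : q ≠ 0) (k : ℤ) :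
    thetaTerm a q (k + 1) = -a * q ^ k * thetaTerm a q k := by
  have h := thetaTerm_sub_one ha hq (k + 1)
  rw [add_sub_cancel_right, show 1 - (k + 1) = -k by ring, zpow_neg] at h
  have := zpow_ne_zero k hq
  field_simp at h
  rw [← h]
  ring

theorem summable_thetaTerm {a q : ℂ} (ha : a ≠ 0) (hq0 : q ≠ 0) (hq : ‖q‖ < 1) :
    Summable (thetaTerm a q) := by
  have hpi : (2 * Real.pi * I : ℂ) ≠ 0 := by simp [Real.pi_ne_zero]
  set t : ℂ := Complex.log q / (2 * Real.pi * I) with ht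
  set w : ℂ := Complex.log (-a) / (2 * Real.pi * I) with hw
  have hqt : Complex.log q = 2 * Real.pi * I * t := by rw [ht]; field_simp
  have haw : Complex.log (-a) = 2 * Real.pi * I * w := by rw [hw]; field_simp
  have htim : 0 < t.im := by
    have hre := congrArg Complex.re hqt
    simp only [Complex.log_re, Complex.mul_re, Complex.mul_im, Complex.re_ofNat, Complex.im_ofNat,
      Complex.ofReal_re, Complex.ofReal_im, Complex.I_re, Complex.I_im] at hre
    have hlog := Real.log_neg (norm_pos_iff.mpr hq0) hq
    nlinarith [Real.pi_pos]
  refine ((summable_jacobiTheta₂_term_iff (w - t / 2) t).mpr htim).congr fun k ↦ ?_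
  have hk : ((k * (k - 1) / 2 : ℤ) : ℂ) = k * (k - 1) / 2 := by
    rw [Int.cast_div (Int.even_mul_pred_self k).two_dvd (by norm_num)]
    push_cast
    rfl
  rw [thetaTerm, jacobiTheta₂_term, ← Complex.exp_log (neg_ne_zero.mpr ha),
    ← Complex.exp_log hq0, ← Complex.exp_int_mul, ← Complex.exp_int_mul, ← Complex.exp_add, hqt,
    haw, hk]
  congr 1
  ring

/-- The finite `q`-Pochhammer symbol `(q; q)_m`. -/
noncomputable def qFact (q : ℂ) (m : ℕ) : ℂ := ∏ i ∈ Finset.range m, (1 - q ^ (i + 1))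

/-- The reciprocal of `(q; q)_m`, extended by zero to negative `m`. -/
noncomputable def qFactInv (q : ℂ) (m : ℤ) : ℂ := if m < 0 then 0 else (qFact q m.toNat)⁻¹

theorem one_sub_pow_succ_ne_zero {q : ℂ} (hq : ‖q‖ < 1) (n : ℕ) : 1 - q ^ (n + 1) ≠ 0 :=
  one_sub_ne_zero_of_norm_lt_one (norm_pow_succ_lt_one hq n)

theorem qFactInv_sub_one {q : ℂ} (hq : ‖q‖ < 1) (m : ℤ) :
    qFactInv q (m - 1) = (1 - q ^ m) * qFactInv q m := by
  rcases lt_trichotomy m 0 with h | rfl | h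
  · simp [qFactInv, h, show m - 1 < 0 by omega]
  · simp [qFactInv]
  · obtain ⟨n, rfl⟩ : ∃ n : ℕ, m = n + 1 := ⟨(m - 1).toNat, by omega⟩
    have hne := one_sub_pow_succ_ne_zero hq n
    rw [qFactInv, qFactInv, if_neg (by omega), if_neg (by omega), add_sub_cancel_right,
      Int.toNat_natCast, show ((n : ℤ) + 1).toNat = n + 1 by omega, qFact, qFact,
      Finset.prod_range_succ, mul_inv]
    norm_cast
    field_simp

/-- The finite form of Jacobi's triple product. -/
theorem hasSum_finite_triple_product {a q : ℂ} (ha : a ≠ 0) (hq0 : q ≠ 0) (hq : ‖q‖ < 1)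
    (n : ℕ) :
    HasSum (fun k : ℤ ↦ qFact q (2 * n) * qFactInv q (n - k) * qFactInv q (n + k) * thetaTerm a q k)
      (∏ i ∈ Finset.range n, (1 - a * q ^ i) * (1 - q / a * q ^ i)) := by
  induction n with
  | zero =>
    have : (fun k : ℤ ↦ qFact q (2 * 0) * qFactInv q ((0 : ℕ) - k) * qFactInv q ((0 : ℕ) + k) *
        thetaTerm a q k) = fun k ↦ if k = 0 then 1 else 0 := by
      ext k
      rcases lt_trichotomy k 0 with h | rfl | h
      · simp [qFactInv, h, h.ne]
      · simp [qFactInv, qFact, thetaTerm]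
      · simp [qFactInv, h, h.ne']
    rw [this]
    simpa using hasSum_ite_eq (0 : ℤ) (1 : ℂ)
  | succ n ih =>
    have hdown := ((Equiv.addRight (-1 : ℤ)).hasSum_iff.mpr ih).mul_left (-a * q ^ n)
    have hup := ((Equiv.addRight (1 : ℤ)).hasSum_iff.mpr ih).mul_left (-(q / a) * q ^ n)
    have hsum := ((ih.mul_left (1 + q ^ (2 * n + 1))).add hdown).add hup
    have hprod (P : ℂ) : P * ((1 - a * q ^ n) * (1 - q / a * q ^ n)) =
        (1 + q ^ (2 * n + 1)) * P + -a * q ^ n * P + -(q / a) * q ^ n * P := by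
      field_simp
      ring
    rw [Finset.prod_range_succ, hprod]
    refine (congrArg (HasSum · _) (funext fun k ↦ ?_)).mpr hsum
    simp only [Function.comp_apply, Equiv.coe_addRight]
    have htd := thetaTerm_sub_one ha hq0 k
    have htu := thetaTerm_add_one ha hq0 k
    have e1 := qFactInv_sub_one hq (n + 1 - k)
    have e2 := qFactInv_sub_one hq (n + 1 + k)
    have e3 := qFactInv_sub_one hq (n - k)
    have e4 := qFactInv_sub_one hq (n + k)
    have hfact : qFact q (2 * (n + 1)) =
        qFact q (2 * n) * (1 - q ^ (2 * n + 1)) * (1 - q ^ (2 * n + 2)) := by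
      rw [show 2 * (n + 1) = 2 * n + 1 + 1 by ring, qFact, Finset.prod_range_succ,
        Finset.prod_range_succ, qFact]
    rw [show (n + 1 - k : ℤ) - 1 = n - k by ring] at e1
    rw [show (n + 1 + k : ℤ) - 1 = n + k by ring] at e2
    have i1 : ((n + 1 : ℕ) - k : ℤ) = n + 1 - k := by push_cast; ring
    have i2 : ((n + 1 : ℕ) + k : ℤ) = n + 1 + k := by push_cast; ring
    have i3 : (n - (k + -1) : ℤ) = n + 1 - k := by ring
    have i4 : (n + (k + -1) : ℤ) = n + k - 1 := by ring
    have i5 : (n - (k + 1) : ℤ) = n - k - 1 := by ring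
    have i6 : (n + (k + 1) : ℤ) = n + 1 + k := by ring
    rw [i1, i2, i3, i4, i5, i6, e3, e4, e1, e2, hfact, ← sub_eq_add_neg k 1, htu]
    have hqk := zpow_ne_zero k hq0
    rw [zpow_sub₀ hq0, zpow_one] at htd
    have htd' : thetaTerm a q (k - 1) = -(q / q ^ k * thetaTerm a q k) / a := by
      rw [← htd]; field_simp
    rw [htd']
    simp only [zpow_sub₀ hq0, zpow_add₀ hq0, zpow_natCast, zpow_one]
    field_simp
    ring

theorem tendsto_qFact {q : ℂ} (hq : ‖q‖ < 1) : Tendsto (qFact q) atTop (𝓝 (qPoch q q)) := by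
  refine (multipliable_qPoch q hq).hasProd.tendsto_prod_nat.congr fun m ↦ ?_
  simp only [qFact, pow_succ']

theorem tendsto_qFactInv {q : ℂ} (hq : ‖q‖ < 1) :
    Tendsto (qFactInv q) atTop (𝓝 (qPoch q q)⁻¹) := by
  have htoNat : Tendsto Int.toNat atTop atTop := tendsto_atTop.mpr fun b ↦ by
    filter_upwards [eventually_ge_atTop (b : ℤ)] with m hm
    omega
  have h := ((tendsto_qFact hq).inv₀ (qPoch_ne_zero hq hq)).comp htoNat
  refine h.congr' ?_
  filter_upwards [eventually_ge_atTop 0] with m hm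
  simp [qFactInv, hm.not_gt]

theorem exists_norm_qFact_le {q : ℂ} (hq : ‖q‖ < 1) : ∃ C, ∀ m, ‖qFact q m‖ ≤ C := by
  obtain ⟨C, hC⟩ := (Metric.isBounded_range_of_tendsto _ (tendsto_qFact hq)).exists_norm_le
  exact ⟨C, fun m ↦ hC _ ⟨m, rfl⟩⟩

theorem exists_norm_qFactInv_le {q : ℂ} (hq : ‖q‖ < 1) : ∃ C, ∀ m, ‖qFactInv q m‖ ≤ C := by
  obtain ⟨C, hC⟩ := (Metric.isBounded_range_of_tendsto _
    ((tendsto_qFact hq).inv₀ (qPoch_ne_zero hq hq))).exists_norm_le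
  refine ⟨C, fun m ↦ ?_⟩
  rw [qFactInv]
  split_ifs
  · simpa using (norm_nonneg _).trans (hC _ ⟨0, rfl⟩)
  · exact hC _ ⟨_, rfl⟩

/-- **Jacobi's triple product identity**. -/
theorem tsum_thetaTerm {a q : ℂ} (ha : a ≠ 0) (hq0 : q ≠ 0) (hq : ‖q‖ < 1) :
    ∑' k, thetaTerm a q k = theta a q := by
  have hE := qPoch_ne_zero hq hq
  obtain ⟨C, hC⟩ := exists_norm_qFact_le hq
  obtain ⟨D, hD⟩ := exists_norm_qFactInv_le hq
  have hC0 : 0 ≤ C := (norm_nonneg _).trans (hC 0)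
  have hD0 : 0 ≤ D := (norm_nonneg _).trans (hD 0)
  have hlim (k : ℤ) : Tendsto (fun n : ℕ ↦ qFact q (2 * n) * qFactInv q (n - k) *
      qFactInv q (n + k) * thetaTerm a q k) atTop (𝓝 ((qPoch q q)⁻¹ * thetaTerm a q k)) := by
    have h1 := (tendsto_qFact hq).comp (tendsto_id.const_mul_atTop' (r := 2) two_pos)
    have h2 := (tendsto_qFactInv hq).comp
      (tendsto_atTop_add_const_right _ (-k) tendsto_natCast_atTop_atTop)
    have h3 := (tendsto_qFactInv hq).comp
      (tendsto_atTop_add_const_right _ k tendsto_natCast_atTop_atTop)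
    have h := ((h1.mul h2).mul h3).mul_const (thetaTerm a q k)
    rw [mul_inv_cancel₀ hE, one_mul] at h
    simpa only [Function.comp_def, id, ← sub_eq_add_neg] using h
  have hdom := tendsto_tsum_of_dominated_convergence
    ((summable_thetaTerm ha hq0 hq).norm.mul_left (C * D * D)) hlim (Eventually.of_forall
      fun n k ↦ by
        simp only [norm_mul]
        gcongr
        · exact hC _
        · exact hD _
        · exact hD _)
  simp_rw [(hasSum_finite_triple_product ha hq0 hq _).tsum_eq, tsum_mul_left] at hdom
  have hprod := ((multipliable_qPoch a hq).hasProd.mul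
    (multipliable_qPoch (q / a) hq).hasProd).tendsto_prod_nat
  have heq := tendsto_nhds_unique hdom hprod
  change _ = qPoch a q * qPoch (q / a) q at heq
  rw [theta, ← heq]
  field_simp

theorem theta_div (a : ℂ) {q : ℂ} (hq0 : q ≠ 0) : theta (q / a) q = theta a q := by
  rw [theta, theta, div_div_cancel₀ hq0]
  ring

theorem theta_mul_right {a q : ℂ} (ha : a ≠ 0) (hq0 : q ≠ 0) (hq : ‖q‖ < 1) :
    theta (a * q) q = -theta a q / a := by
  have h1 : q / (a * q) = a⁻¹ := by field_simp
  have h2 : a⁻¹ * q = q / a := by field_simp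
  rw [theta, theta, h1, qPoch_eq_one_sub_mul a hq, qPoch_eq_one_sub_mul a⁻¹ hq, h2]
  field_simp
  ring

/-- The 3-dissection of the theta function. -/
theorem theta_eq_add_three {a q : ℂ} (ha : a ≠ 0) (hq0 : q ≠ 0) (hq : ‖q‖ < 1) :
    theta a q = theta (a ^ 3 * q ^ 3) (q ^ 9) - a * theta (a ^ 3 * q ^ 6) (q ^ 9) +
      a ^ 2 * q * theta (a ^ 3 * q ^ 9) (q ^ 9) := by
  have hq9 := norm_pow_succ_lt_one hq 8
  have hs (i : ℕ) := summable_thetaTerm (mul_ne_zero (pow_ne_zero 3 ha) (pow_ne_zero i hq0))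
    (pow_ne_zero 9 hq0) hq9
  have ht (i : ℕ) := tsum_thetaTerm (mul_ne_zero (pow_ne_zero 3 ha) (pow_ne_zero i hq0))
    (pow_ne_zero 9 hq0) hq9
  have hsplit (m : ℤ) (j : ℕ) (e : ℤ)
      (he : (m * 3 + j) * (m * 3 + j - 1) = 2 * (9 * (m * (m - 1) / 2) + (3 * (j + 1)) * m + e)) :
      thetaTerm a q (m * 3 + j) =
        (-a) ^ j * q ^ e * thetaTerm (a ^ 3 * q ^ (3 * (j + 1))) (q ^ 9) m := by
    have hna : -a ≠ 0 := neg_ne_zero.mpr ha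
    rw [thetaTerm, thetaTerm, he, Int.mul_ediv_cancel_left _ two_ne_zero,
      show -(a ^ 3 * q ^ (3 * (j + 1))) = (-a) ^ 3 * q ^ (3 * (j + 1)) by ring,
      mul_zpow, zpow_add₀ hna, zpow_add₀ hq0, zpow_add₀ hq0]
    simp only [← zpow_natCast, ← zpow_mul]
    push_cast
    rw [mul_comm m 3]
    ring
  have htwo (m : ℤ) : 2 * (m * (m - 1) / 2) = m * (m - 1) :=
    Int.mul_ediv_cancel' (Int.even_mul_pred_self m).two_dvd
  have h0 (m : ℤ) := hsplit m 0 0 (by push_cast; linear_combination -9 * htwo m)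
  have h1 (m : ℤ) := hsplit m 1 0 (by push_cast; linear_combination -9 * htwo m)
  have h2 (m : ℤ) := hsplit m 2 1 (by push_cast; linear_combination -9 * htwo m)
  norm_num at h0 h1 h2
  have hsum := (Int.divModEquiv 3).symm.summable_iff.mpr (summable_thetaTerm ha hq0 hq)
  rw [← tsum_thetaTerm ha hq0 hq, ← (Int.divModEquiv 3).symm.tsum_eq]
  refine (hsum.tsum_prod' fun _ ↦ (hasSum_fintype _).summable).trans ?_
  simp only [tsum_fintype, Fin.sum_univ_three]
  norm_num [h0, h1, h2]
  rw [Summable.tsum_add (((hs 3).add ((hs 6).mul_left a).neg).congr fun _ ↦ by simp)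
    ((hs 9).mul_left _),
    Summable.tsum_add (hs 3) ((hs 6).mul_left a).neg, tsum_neg, tsum_mul_left, tsum_mul_left,
    ht, ht, ht]
  ring

/-! ### Dissections of eta products -/

/-- Euler's product `(q; q)_∞`. -/
noncomputable def euler (q : ℂ) : ℂ := qPoch q q

theorem euler_ne_zero {q : ℂ} (hq : ‖q‖ < 1) : euler q ≠ 0 := qPoch_ne_zero hq hq

theorem euler_eq_qPoch_sq_mul {q : ℂ} (hq : ‖q‖ < 1) :
    euler q = qPoch q (q ^ 2) * euler (q ^ 2) := by
  rw [euler, euler, qPoch_eq_mul_two q hq, ← sq]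

theorem euler_sq_eq {q : ℂ} (hq : ‖q‖ < 1) : euler (q ^ 2) = qPoch (-q) q * euler q := by
  rw [euler, euler, ← qPoch_mul_qPoch_neg q hq, mul_comm]

theorem theta_self_sq {q : ℂ} (hq0 : q ≠ 0) (hq : ‖q‖ < 1) :
    theta q (q ^ 2) * euler (q ^ 2) = euler q ^ 2 := by
  have h : q ^ 2 / q = q := by field_simp
  rw [theta, h, euler_eq_qPoch_sq_mul hq, euler]
  ring

theorem theta_neg_one {q : ℂ} (hq : ‖q‖ < 1) :
    theta (-1) q * euler q = 2 * euler (q ^ 2) ^ 2 := by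
  rw [theta, qPoch_eq_one_sub_mul (-1) hq, euler_sq_eq hq, euler, div_neg, div_one, neg_one_mul]
  ring

theorem theta_self_pow_six {q : ℂ} (hq0 : q ≠ 0) (hq : ‖q‖ < 1) :
    theta q (q ^ 6) * euler (q ^ 2) * euler (q ^ 3) = euler q * euler (q ^ 6) ^ 2 := by
  have h : q ^ 6 / q = q ^ 5 := by field_simp
  have h1 := euler_eq_qPoch_sq_mul hq
  have h3 := euler_eq_qPoch_sq_mul (norm_pow_succ_lt_one hq 2)
  rw [qPoch_eq_mul_three q (norm_pow_succ_lt_one hq 1)] at h1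
  ring_nf at h1 h3
  rw [theta, h, h1, h3, euler, euler]
  ring

theorem theta_neg_self_cube {q : ℂ} (hq0 : q ≠ 0) (hq : ‖q‖ < 1) :
    theta (-q) (q ^ 3) * euler q * euler (q ^ 6) = euler (q ^ 2) * euler (q ^ 3) ^ 2 := by
  have h : q ^ 3 / -q = -q ^ 2 := by field_simp
  have h2 := euler_sq_eq hq
  have h6 := euler_sq_eq (norm_pow_succ_lt_one hq 2)
  rw [qPoch_eq_mul_three (-q) hq] at h2
  ring_nf at h2 h6
  rw [theta, h, h2, h6, euler, euler]
  ring

theorem theta_self_sq_dissection {q : ℂ} (hq0 : q ≠ 0) (hq : ‖q‖ < 1) :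
    theta q (q ^ 2) = theta (q ^ 9) (q ^ 18) - 2 * q * theta (q ^ 3) (q ^ 18) := by
  have h18 : q ^ 18 ≠ 0 := pow_ne_zero _ hq0
  have h3 : q ^ 3 ≠ 0 := pow_ne_zero _ hq0
  have hd := theta_eq_add_three hq0 (pow_ne_zero 2 hq0) (norm_pow_succ_lt_one hq 1)
  have hm := theta_mul_right h3 h18 (norm_pow_succ_lt_one hq 17)
  have hi := theta_div (q ^ 3) h18
  have h15 : q ^ 18 / q ^ 3 = q ^ 15 := by field_simp
  rw [h15] at hi
  rw [← pow_add] at hm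
  ring_nf at hd hm hi ⊢
  rw [hd, hm, hi]
  field_simp
  ring

theorem theta_neg_one_dissection {q : ℂ} (hq0 : q ≠ 0) (hq : ‖q‖ < 1) :
    theta (-1) q = 2 * theta (-q ^ 3) (q ^ 9) + q * theta (-1) (q ^ 9) := by
  have h9 : q ^ 9 ≠ 0 := pow_ne_zero _ hq0
  have hd := theta_eq_add_three (neg_ne_zero.mpr one_ne_zero) hq0 hq
  have hm := theta_mul_right (neg_ne_zero.mpr one_ne_zero) h9 (norm_pow_succ_lt_one hq 8)
  have hi := theta_div (-q ^ 3) h9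
  have h6 : q ^ 9 / -q ^ 3 = -q ^ 6 := by field_simp
  rw [h6] at hi
  norm_num at hd hm
  rw [hd, hm, hi]
  ring

theorem two_mul_euler_mul_euler_sq {q : ℂ} (hq0 : q ≠ 0) (hq : ‖q‖ < 1) :
    2 * (euler q * euler (q ^ 2)) = theta q (q ^ 2) * theta (-1) q := by
  have h1 := euler_ne_zero hq
  have h2 := euler_ne_zero (norm_pow_succ_lt_one hq 1)
  apply mul_right_cancel₀ (mul_ne_zero h1 h2)
  linear_combination -(theta (-1) q * euler q) * theta_self_sq hq0 hq -
    euler q ^ 2 * theta_neg_one hq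

/-- The product part of Ramanujan's cubic continued fraction. -/
noncomputable def cubicProd (q : ℂ) : ℂ :=
  qPoch (q ^ 5) (q ^ 6) * qPoch q (q ^ 6) / qPoch (q ^ 3) (q ^ 6) ^ 2

theorem cubicProd_eq {q : ℂ} (hq0 : q ≠ 0) (hq : ‖q‖ < 1) :
    cubicProd q = euler q * euler (q ^ 6) ^ 3 / (euler (q ^ 2) * euler (q ^ 3) ^ 3) := by
  have h : q ^ 6 / q = q ^ 5 := by field_simp
  have h2 := euler_ne_zero (norm_pow_succ_lt_one hq 1)
  have h3 := euler_ne_zero (norm_pow_succ_lt_one hq 2)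
  have h6 := euler_ne_zero (norm_pow_succ_lt_one hq 5)
  have hp := qPoch_ne_zero (norm_pow_succ_lt_one hq 2) (norm_pow_succ_lt_one hq 5)
  have e3 := euler_eq_qPoch_sq_mul (norm_pow_succ_lt_one hq 2)
  have ht := theta_self_pow_six hq0 hq
  norm_num [← pow_mul] at h2 h3 h6 hp e3
  rw [theta, h, ← euler] at ht
  rw [cubicProd, div_eq_div_iff (pow_ne_zero 2 hp) (by positivity)]
  apply mul_right_cancel₀ h6
  linear_combination euler (q ^ 3) ^ 2 * ht + euler q * euler (q ^ 6) ^ 2 *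
    (euler (q ^ 3) + qPoch (q ^ 3) (q ^ 6) * euler (q ^ 6)) * e3

/-- The 3-dissection of `(x; x)_∞ (x²; x²)_∞` in terms of the cubic continued fraction. -/
theorem cubicProd_dissection {x : ℂ} (hx0 : x ≠ 0) (hx : ‖x‖ < 1) :
    (1 - x * cubicProd (x ^ 3) - 2 * (x * cubicProd (x ^ 3)) ^ 2) *
      (euler (x ^ 9) * euler (x ^ 18)) = cubicProd (x ^ 3) * (euler x * euler (x ^ 2)) := by
  have h3 := euler_ne_zero (norm_pow_succ_lt_one hx 2)
  have h6 := euler_ne_zero (norm_pow_succ_lt_one hx 5)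
  have h9 := euler_ne_zero (norm_pow_succ_lt_one hx 8)
  have h18 := euler_ne_zero (norm_pow_succ_lt_one hx 17)
  have hx3 := norm_pow_succ_lt_one hx 2
  have hx9 := norm_pow_succ_lt_one hx 8
  have hphi := theta_self_sq (pow_ne_zero 9 hx0) hx9
  have hpsi := theta_neg_one hx9
  have homega := theta_self_pow_six (pow_ne_zero 3 hx0) hx3
  have ha := theta_neg_self_cube (pow_ne_zero 3 hx0) hx3
  have hc := cubicProd_eq (pow_ne_zero 3 hx0) hx3
  have hmain := two_mul_euler_mul_euler_sq hx0 hx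
  rw [theta_self_sq_dissection hx0 hx, theta_neg_one_dissection hx0 hx] at hmain
  norm_num [← pow_mul] at h3 h6 h9 h18 hphi hpsi homega ha hc
  rw [← eq_div_iff (by positivity)] at hphi hpsi
  rw [mul_assoc, ← eq_div_iff (by positivity)] at homega ha
  rw [hphi, hpsi, homega, ha] at hmain
  have hprod := (eq_div_iff (two_ne_zero' ℂ)).mpr ((mul_comm _ _).trans hmain)
  rw [hprod, hc]
  field_simp
  ring

end QSeries

open QSeries

theorem dedekindEta_eq_exp_mul_euler (τ : ℂ) :
    dedekindEta τ = Complex.exp (Real.pi * I * τ / 12) * euler (nome τ) := by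
  rw [dedekindEta, euler, qPoch]
  congr! 3 with n
  rw [nome, ← pow_succ', ← Complex.exp_nat_mul]
  congr 2
  push_cast
  ring

theorem norm_nome_lt_one {τ : ℂ} (hτ : 0 < τ.im) : ‖nome τ‖ < 1 :=
  UpperHalfPlane.norm_exp_two_pi_I_lt_one ⟨τ, hτ⟩

theorem nome_natCast_mul (n : ℕ) (τ : ℂ) : nome (n * τ) = nome τ ^ n := by
  rw [nome, nome, ← Complex.exp_nat_mul]
  congr 1
  ring

theorem c_eq_exp_mul_cubicProd {τ : ℂ} (hτ : 0 < τ.im) :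
    c τ = Complex.exp (2 * Real.pi * I * τ / 3) * cubicProd (nome τ) := by
  have hq := norm_nome_lt_one hτ
  have hq6 := norm_pow_succ_lt_one hq 5
  have hne := qPoch_ne_zero (norm_pow_succ_lt_one hq 2) hq6
  have h1 := (multipliable_qPoch (nome τ) hq6).hasProd
  have h3 := (multipliable_qPoch (nome τ ^ 3) hq6).hasProd
  have h5 := (multipliable_qPoch (nome τ ^ 5) hq6).hasProd
  have h := ((h5.mul h1).div₀ (h3.mul h3) (mul_ne_zero hne hne)).tprod_eq
  rw [← qPoch, ← qPoch, ← qPoch] at h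
  rw [c, cubicProd, sq, ← h]
  congr! 3 with n
  rw [show 6 * (n + 1) - 1 = 5 + 6 * n by omega, show 6 * (n + 1) - 5 = 1 + 6 * n by omega,
    show 6 * (n + 1) - 3 = 3 + 6 * n by omega]
  ring

/-- For `τ` in the upper half-plane,
`(1 − c(τ) − 2c(τ)²)·η(3τ)·η(6τ) = c(τ)·η(τ/3)·η(2τ/3)`. -/
theorem cubicCF_eta_quotient (τ : ℂ) (hτ : 0 < τ.im) :
    (1 - c τ - 2 * c τ ^ 2) * dedekindEta (3 * τ) * dedekindEta (6 * τ) =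
      c τ * dedekindEta (τ / 3) * dedekindEta (2 * τ / 3) := by
  have hτ3 : 0 < (τ / 3).im := by
    rw [show τ / 3 = τ / (3 : ℝ) by norm_num, Complex.div_ofReal_im]
    positivity
  set x := nome (τ / 3) with hx
  have hpow (n : ℕ) (σ : ℂ) (hσ : σ = n * (τ / 3)) : nome σ = x ^ n := by
    rw [hσ, nome_natCast_mul]
  have hx1 : Complex.exp (2 * Real.pi * I * τ / 3) = x := by
    rw [hx, nome, mul_div_assoc]
  have hexp : Complex.exp (Real.pi * I * (3 * τ) / 12) * Complex.exp (Real.pi * I * (6 * τ) / 12) =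
      x * (Complex.exp (Real.pi * I * (τ / 3) / 12) *
        Complex.exp (Real.pi * I * (2 * τ / 3) / 12)) := by
    rw [← hx1, ← Complex.exp_add, ← Complex.exp_add, ← Complex.exp_add]
    congr 1
    ring
  have hmain := cubicProd_dissection (x := x) (Complex.exp_ne_zero _) (norm_nome_lt_one hτ3)
  rw [c_eq_exp_mul_cubicProd hτ, hx1, dedekindEta_eq_exp_mul_euler, dedekindEta_eq_exp_mul_euler,
    dedekindEta_eq_exp_mul_euler, dedekindEta_eq_exp_mul_euler, ← hx,
    hpow 3 τ (by push_cast; ring), hpow 9 (3 * τ) (by push_cast; ring),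
    hpow 18 (6 * τ) (by push_cast; ring), hpow 2 (2 * τ / 3) (by push_cast; ring)]
  set v := cubicProd (x ^ 3)
  linear_combination (1 - x * v - 2 * (x * v) ^ 2) * euler (x ^ 9) * euler (x ^ 18) * hexp +
    x * (Complex.exp (Real.pi * I * (τ / 3) / 12) *
      Complex.exp (Real.pi * I * (2 * τ / 3) / 12)) * hmain
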